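/- Let T > 0, let U be a metrizable Suslin space, let G ∈ L¹([0,T];ℝ), and let l : [0,T] × U → [−∞,+∞] be a measurable function such that l(t,·) is lower semicontinuous for every t ∈ [0,T], and satisfying one of the two conditions: (1) |l(t,u)| ≤ G(t) for a.e. t ∈ [0,T] and all u ∈ U, or (2) l ≥ 0. If (μ_n) is a sequence of Young measures on U over [0,T] converging stably to a Young measure μ, then ∫_{U×[0,T]} l(t,u) μ(du,dt) ≤ liminf_{n→∞} ∫_{U×[0,T]} l(t,u) μ_n(du,dt). -/

import Mathlib

open MeasureTheory Set Filter Topology ENNReal NNReal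

/-- A Young measure on `U` over `[0,T]`. -/
def IsYoungMeasure {U : Type*} [MeasurableSpace U] (T : ℝ) (μ : Measure (U × ℝ)) : Prop :=
  ∀ D : Set ℝ, MeasurableSet D → μ (Set.univ ×ˢ D) = volume (D ∩ Set.Icc 0 T)

/-- Stable convergence of Young measures on `U` over `[0,T]`. -/
def StablyTendsTo {U : Type*} [TopologicalSpace U] [MeasurableSpace U] (T : ℝ)
    (μs : ℕ → Measure (U × ℝ)) (μ : Measure (U × ℝ)) : Prop :=
  ∀ D : Set ℝ, MeasurableSet D → D ⊆ Set.Icc 0 T →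
    ∀ f : BoundedContinuousFunction U ℝ,
      Filter.Tendsto (fun n => ∫ p in Set.univ ×ˢ D, f p.1 ∂(μs n)) Filter.atTop
        (nhds (∫ p in Set.univ ×ˢ D, f p.1 ∂μ))

/-- `U` is a Suslin space: a continuous surjective image of a Polish space. -/
def IsSuslin (U : Type*) [TopologicalSpace U] : Prop :=
  ∃ (S : Type) (ts : TopologicalSpace S), @PolishSpace S ts ∧
    ∃ φ : S → U, @Continuous S U ts _ φ ∧ Function.Surjective φ

/-- The nonnegative part of an extended real number, as an extended nonnegative real. -/
noncomputable def erealPos (x : EReal) : ℝ≥0∞ :=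
  if x = ⊤ then ⊤ else ENNReal.ofReal x.toReal

/-- The integral of an extended-real-valued function, with values in `[-∞,+∞]`. -/
noncomputable def eIntegral {α : Type*} [MeasurableSpace α] (μ : Measure α)
    (g : α → EReal) : EReal :=
  ((∫⁻ a, erealPos (g a) ∂μ : ℝ≥0∞) : EReal) - ((∫⁻ a, erealPos (-(g a)) ∂μ : ℝ≥0∞) : EReal)

theorem analytic_step {ν : Measure ℝ} (f : (ℕ → ℕ) → ℝ) (c : ℝ≥0∞) (B : Set (ℕ → ℕ))
    (k : ℕ) (h : c < ν (f '' B)) : ∃ N, c < ν (f '' (B ∩ {x | x k ≤ N})) := by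
  have h1 : f '' B = ⋃ N, f '' (B ∩ {x | x k ≤ N}) := by
    rw [← image_iUnion, ← inter_iUnion]
    congr 1
    ext x
    simp only [mem_inter_iff, mem_iUnion, mem_ofPred_eq]
    exact ⟨fun hx => ⟨hx, x k, le_rfl⟩, fun hx => hx.1⟩
  have hm : Monotone fun N => f '' (B ∩ {x : ℕ → ℕ | x k ≤ N}) := by
    intro a b hab
    refine image_mono (inter_subset_inter_right _ ?_)
    intro x hx
    exact le_trans hx hab
  rw [h1, hm.measure_iUnion] at h
  exact lt_iSup_iff.1 h

theorem analytic_inner {ν : Measure ℝ} [IsFiniteMeasure ν] (f : (ℕ → ℕ) → ℝ) (hf : Continuous f)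
    (c : ℝ≥0∞) (hc : c < ν (range f)) : ∃ K ⊆ range f, IsCompact K ∧ c ≤ ν K := by
  have step : ∀ (k : ℕ) (B : {B : Set (ℕ → ℕ) // c < ν (f '' B)}),
      ∃ N, c < ν (f '' (B.1 ∩ {x | x k ≤ N})) := fun k B => analytic_step f c B.1 k B.2
  choose N hN using step
  let B : ℕ → {B : Set (ℕ → ℕ) // c < ν (f '' B)} := fun k =>
    Nat.rec ⟨univ, by rwa [image_univ]⟩ (fun k B => ⟨B.1 ∩ {x | x k ≤ N k B}, hN k B⟩) k
  let n : ℕ → ℕ := fun k => N k (B k)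
  have hBs : ∀ k, (B (k+1)).1 = (B k).1 ∩ {x | x k ≤ n k} := fun k => rfl
  have hBn : ∀ k x, x ∈ (B k).1 → ∀ i < k, x i ≤ n i := by
    intro k
    induction k with
    | zero => intro x _ i hi; omega
    | succ k ih =>
      intro x hx i hi
      rw [hBs] at hx
      rcases Nat.lt_succ_iff_lt_or_eq.1 hi with h | h
      · exact ih x hx.1 i h
      · subst h; exact hx.2
  have hanti : Antitone fun k => closure (f '' (B k).1) := by
    refine antitone_nat_of_succ_le fun k => closure_mono (image_mono ?_)
    rw [hBs]; exact inter_subset_left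
  let K : Set (ℕ → ℕ) := Set.pi univ fun i => Iic (n i)
  have hK : IsCompact K := isCompact_univ_pi fun i => (finite_Iic (n i)).isCompact
  have hsub : (⋂ k, closure (f '' (B k).1)) ⊆ f '' K := by
    intro y hy
    rw [mem_iInter] at hy
    have : ∀ k : ℕ, ∃ x ∈ (B k).1, dist y (f x) < 1 / ((k:ℝ) + 1) := by
      intro k
      obtain ⟨z, ⟨x, hx, rfl⟩, hz⟩ := Metric.mem_closure_iff.1 (hy k) (1 / ((k:ℝ)+1)) (by positivity)
      exact ⟨x, hx, hz⟩
    choose x hx hxd using this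
    obtain ⟨z, hzK, φ, hφ, hlim⟩ := hK.tendsto_subseq (x := fun k i => min (x k i) (n i))
      (fun k i _ => mem_Iic.2 (min_le_right _ _))
    have hlim2 : Tendsto (x ∘ φ) atTop (𝓝 z) := by
      rw [tendsto_pi_nhds] at hlim ⊢
      intro i
      refine (hlim i).congr' ?_
      filter_upwards [eventually_gt_atTop i] with k hk
      have := hBn (φ k) _ (hx (φ k)) i (lt_of_lt_of_le hk (hφ.id_le k))
      simp [this]
    refine ⟨z, hzK, ?_⟩
    have h1 : Tendsto (f ∘ (x ∘ φ)) atTop (𝓝 (f z)) := (hf.tendsto z).comp hlim2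
    have h2 : Tendsto (f ∘ x) atTop (𝓝 y) := by
      rw [tendsto_iff_dist_tendsto_zero]
      refine squeeze_zero (fun _ => dist_nonneg) (fun k => ?_) tendsto_one_div_add_atTop_nhds_zero_nat
      rw [dist_comm]; exact (hxd k).le
    exact tendsto_nhds_unique h1 (h2.comp hφ.tendsto_atTop)
  refine ⟨f '' K, image_subset_range _ _, hK.image hf, ?_⟩
  refine le_trans ?_ (measure_mono hsub)
  rw [hanti.measure_iInter (fun k => isClosed_closure.measurableSet.nullMeasurableSet)
    ⟨0, measure_ne_top _ _⟩]
  exact le_iInf fun k => (B k).2.le.trans (measure_mono subset_closure)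

theorem analytic_nullMeasurable {ν : Measure ℝ} [IsFiniteMeasure ν] {A : Set ℝ}
    (hA : AnalyticSet A) : NullMeasurableSet A ν := by
  rw [AnalyticSet] at hA
  rcases hA with rfl | ⟨f, hf, rfl⟩
  · exact MeasurableSet.empty.nullMeasurableSet
  by_cases h0 : ν (range f) = 0
  · exact NullMeasurableSet.of_null h0
  obtain ⟨c, -, hc, hclim⟩ := exists_seq_strictMono_tendsto' (pos_iff_ne_zero.2 h0)
  choose K hKA hKc hKν using fun k => analytic_inner f hf (c k) (hc k).2
  have hL : (⋃ k, K k) ⊆ range f := iUnion_subset hKA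
  have hLm : MeasurableSet (⋃ k, K k) := MeasurableSet.iUnion fun k => (hKc k).measurableSet
  have hge : ν (range f) ≤ ν (⋃ k, K k) :=
    le_of_tendsto' hclim fun k => (hKν k).trans (measure_mono (subset_iUnion K k))
  have := ae_eq_of_ae_subset_of_measure_ge (Eventually.of_forall hL) hge hLm.nullMeasurableSet
    (measure_ne_top _ _)
  exact hLm.nullMeasurableSet.congr this

theorem ennreal_liminf_add (u v : ℕ → ℝ≥0∞) :
    liminf u atTop + liminf v atTop ≤ liminf (fun n => u n + v n) atTop := by
  have h : ∀ w : ℕ → ℝ≥0∞, Tendsto (fun n => ⨅ i ≥ n, w i) atTop (𝓝 (liminf w atTop)) := by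
    intro w
    rw [liminf_eq_iSup_iInf_of_nat]
    refine tendsto_atTop_iSup fun a b hab => ?_
    exact le_iInf₂ fun i hi => iInf₂_le i (le_trans hab hi)
  refine le_of_tendsto' ((h u).add (h v)) fun n => le_liminf_of_le (by isBoundedDefault) ?_
  filter_upwards [eventually_ge_atTop n] with i hi
  exact add_le_add (iInf₂_le i hi) (iInf₂_le i hi)

theorem IsYoungMeasure.finite {U : Type*} [MeasurableSpace U] {T : ℝ} {μ : Measure (U × ℝ)}
    (h : IsYoungMeasure T μ) : IsFiniteMeasure μ := by
  refine ⟨?_⟩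
  have := h univ MeasurableSet.univ
  rw [univ_prod_univ, univ_inter] at this
  rw [this]; simp

theorem rect_lsc {U : Type*} [TopologicalSpace U] [TopologicalSpace.MetrizableSpace U]
    [MeasurableSpace U] [BorelSpace U] {T : ℝ} {μs : ℕ → Measure (U × ℝ)} {μ : Measure (U × ℝ)}
    (hμs : ∀ n, IsYoungMeasure T (μs n)) (hμ : IsYoungMeasure T μ) (hconv : StablyTendsTo T μs μ)
    {V : Set U} (hV : IsOpen V) {D : Set ℝ} (hD : MeasurableSet D) (hDT : D ⊆ Icc 0 T) :
    μ (V ×ˢ D) ≤ liminf (fun n => μs n (V ×ˢ D)) atTop := by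
  have := hμ.finite
  have := fun n => (hμs n).finite
  have hF : IsClosed Vᶜ := hV.isClosed_compl
  let c : ℕ → BoundedContinuousFunction U ℝ := fun k =>
    BoundedContinuousFunction.ofNormedAddCommGroup (fun u => 1 - ((hF.apprSeq k u : ℝ≥0) : ℝ))
      (by fun_prop) 1 (fun u => by
        have h1 : ((hF.apprSeq k u : ℝ≥0) : ℝ) ≤ 1 := by
          exact_mod_cast HasOuterApproxClosed.apprSeq_apply_le_one hF k u
        have h2 : 0 ≤ ((hF.apprSeq k u : ℝ≥0) : ℝ) := NNReal.coe_nonneg _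
        rw [Real.norm_eq_abs, abs_le]; constructor <;> linarith)
  have hc : ∀ k u, c k u = 1 - ((hF.apprSeq k u : ℝ≥0) : ℝ) := fun k u => rfl
  have hcle : ∀ k u, c k u ≤ V.indicator 1 u := by
    intro k u
    rw [hc]
    by_cases hu : u ∈ V
    · simp [hu]
    · have : hF.apprSeq k u = 1 := HasOuterApproxClosed.apprSeq_apply_eq_one hF k hu
      simp [hu, this]
  have hclim : ∀ u, Tendsto (fun k => c k u) atTop (𝓝 (V.indicator 1 u)) := by
    intro u
    have h1 := tendsto_pi_nhds.1 (HasOuterApproxClosed.tendsto_apprSeq hF) u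
    have h2 : Tendsto (fun k => c k u) atTop
        (𝓝 (1 - ((Vᶜ.indicator (fun _ => (1:ℝ≥0)) u : ℝ≥0) : ℝ))) :=
      ((NNReal.continuous_coe.tendsto _).comp h1).const_sub 1
    convert h2 using 2
    by_cases hu : u ∈ V <;> simp [hu]
  have hind : ∀ ν : Measure (U × ℝ), ∫ p in univ ×ˢ D, V.indicator (1 : U → ℝ) p.1 ∂ν =
      ν.real (V ×ˢ D) := by
    intro ν
    have h1 : (fun p : U × ℝ => V.indicator (1 : U → ℝ) p.1) =
        (Prod.fst ⁻¹' V).indicator 1 := by ext p; rfl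
    rw [h1, integral_indicator_one (measurable_fst hV.measurableSet), measureReal_restrict_apply (measurable_fst hV.measurableSet)]
    congr 1
    ext p; simp
  have hcm : ∀ k, Measurable fun p : U × ℝ => c k p.1 := fun k =>
    (c k).continuous.measurable.comp measurable_fst
  have hcint : ∀ k (ν : Measure (U × ℝ)) [IsFiniteMeasure ν], Integrable (fun p : U × ℝ => c k p.1) ν := by
    intro k ν _
    refine Integrable.of_bound (hcm k).aestronglyMeasurable ‖c k‖ (Eventually.of_forall fun p => ?_)
    exact (c k).norm_coe_le_norm _
  have hiint : ∀ (ν : Measure (U × ℝ)) [IsFiniteMeasure ν],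
      Integrable (fun p : U × ℝ => V.indicator (1 : U → ℝ) p.1) ν := by
    intro ν _
    refine Integrable.of_bound
      ((measurable_one.indicator hV.measurableSet).comp measurable_fst).aestronglyMeasurable 1
        (Eventually.of_forall fun p => ?_)
    by_cases hu : p.1 ∈ V <;> simp [hu]
  have hcI : Tendsto (fun k => ∫ p in univ ×ˢ D, c k p.1 ∂μ) atTop (𝓝 (μ.real (V ×ˢ D))) := by
    rw [← hind]
    refine tendsto_integral_of_dominated_convergence (fun _ => 1)
      (fun k => (hcm k).aestronglyMeasurable) (integrable_const _) (fun k => ?_) ?_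
    · refine Eventually.of_forall fun p => ?_
      exact (BoundedContinuousFunction.norm_coe_le_norm _ _).trans
        (BoundedContinuousFunction.norm_ofNormedAddCommGroup_le _ zero_le_one _)
    · exact Eventually.of_forall fun p => hclim p.1
  refine le_of_forall_lt fun a ha => ?_
  obtain ⟨b, hab, hb⟩ := exists_between ha
  have hbtop : b ≠ ⊤ := ne_top_of_lt hb
  have hbr : b.toReal < μ.real (V ×ˢ D) := (ENNReal.toReal_lt_toReal hbtop (measure_ne_top _ _)).2 hb
  obtain ⟨k, hk⟩ := (hcI.eventually_const_lt hbr).exists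
  refine lt_of_lt_of_le hab (le_liminf_of_le (by isBoundedDefault) ?_)
  filter_upwards [(hconv D hD hDT (c k)).eventually_const_lt hk] with n hn
  rw [← ENNReal.toReal_le_toReal hbtop (measure_ne_top _ _)]
  refine hn.le.trans ?_
  change _ ≤ (μs n).real (V ×ˢ D)
  rw [← hind]
  exact integral_mono (hcint k _) (hiint _) fun p => hcle k p.1

theorem finite_union_lsc {U : Type*} [TopologicalSpace U] [TopologicalSpace.MetrizableSpace U]
    [MeasurableSpace U] [BorelSpace U] {T : ℝ} {μs : ℕ → Measure (U × ℝ)} {μ : Measure (U × ℝ)}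
    (hμs : ∀ n, IsYoungMeasure T (μs n)) (hμ : IsYoungMeasure T μ) (hconv : StablyTendsTo T μs μ)
    {B : ℕ → Set U} (hB : ∀ i, IsOpen (B i)) {A : ℕ → Set ℝ} (hA : ∀ i, MeasurableSet (A i))
    (N : ℕ) : ∀ {V : Set U} (_ : IsOpen V) {D : Set ℝ} (_ : MeasurableSet D) (_ : D ⊆ Icc 0 T),
    μ ((univ ×ˢ D) ∩ (V ×ˢ univ ∪ ⋃ i < N, B i ×ˢ A i)) ≤
      liminf (fun n => μs n ((univ ×ˢ D) ∩ (V ×ˢ univ ∪ ⋃ i < N, B i ×ˢ A i))) atTop := by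
  induction N with
  | zero =>
    intro V hV D hD hDT
    have : (univ ×ˢ D) ∩ (V ×ˢ univ ∪ ⋃ i < 0, B i ×ˢ A i) = V ×ˢ D := by
      ext p; simp [and_comm]
    rw [this]
    exact rect_lsc hμs hμ hconv hV hD hDT
  | succ N ih =>
    intro V hV D hD hDT
    have key : ∀ ν : Measure (U × ℝ),
        ν ((univ ×ˢ D) ∩ (V ×ˢ univ ∪ ⋃ i < N + 1, B i ×ˢ A i)) =
        ν ((univ ×ˢ (D ∩ A N)) ∩ ((V ∪ B N) ×ˢ univ ∪ ⋃ i < N, B i ×ˢ A i)) +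
        ν ((univ ×ˢ (D \ A N)) ∩ (V ×ˢ univ ∪ ⋃ i < N, B i ×ˢ A i)) := by
      intro ν
      rw [← measure_inter_add_sdiff _ (MeasurableSet.univ.prod (hA N) : MeasurableSet ((univ : Set U) ×ˢ A N))]
      congr 2
      · ext ⟨u, t⟩
        simp only [Nat.lt_succ_iff_lt_or_eq, mem_inter_iff, mem_union, mem_prod, mem_univ, mem_iUnion,
          true_and, and_true, exists_prop, or_and_right, exists_or, exists_eq_left]
        generalize (∃ x < N, u ∈ B x ∧ t ∈ A x) = P
        tauto
      · ext ⟨u, t⟩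
        simp only [Nat.lt_succ_iff_lt_or_eq, mem_inter_iff, mem_union, mem_prod, mem_univ, mem_iUnion,
          true_and, and_true, exists_prop, or_and_right, exists_or, exists_eq_left, Set.mem_sdiff]
        generalize (∃ x < N, u ∈ B x ∧ t ∈ A x) = P
        tauto
    simp_rw [key]
    have h1 := ih (hV.union (hB N)) (hD.inter (hA N)) (inter_subset_left.trans hDT)
    have h2 := ih hV (hD.diff (hA N)) (sdiff_subset.trans hDT)
    refine (add_le_add h1 h2).trans ?_
    exact ennreal_liminf_add _ _

theorem countable_union_lsc {U : Type*} [TopologicalSpace U] [TopologicalSpace.MetrizableSpace U]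
    [MeasurableSpace U] [BorelSpace U] {T : ℝ} {μs : ℕ → Measure (U × ℝ)} {μ : Measure (U × ℝ)}
    (hμs : ∀ n, IsYoungMeasure T (μs n)) (hμ : IsYoungMeasure T μ) (hconv : StablyTendsTo T μs μ)
    {B : ℕ → Set U} (hB : ∀ i, IsOpen (B i)) {A : ℕ → Set ℝ} (hA : ∀ i, MeasurableSet (A i)) :
    μ ((univ ×ˢ Icc 0 T) ∩ ⋃ i, B i ×ˢ A i) ≤
      liminf (fun n => μs n ((univ ×ˢ Icc 0 T) ∩ ⋃ i, B i ×ˢ A i)) atTop := by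
  have h1 : ((univ : Set U) ×ˢ Icc 0 T) ∩ ⋃ i, B i ×ˢ A i =
      ⋃ N, (univ ×ˢ Icc 0 T) ∩ ((∅ : Set U) ×ˢ (univ : Set ℝ) ∪ ⋃ i < N, B i ×ˢ A i) := by
    ext ⟨u, t⟩
    simp only [mem_inter_iff, mem_iUnion, mem_union, mem_prod, mem_empty_iff_false, false_and,
      false_or, exists_prop]
    constructor
    · rintro ⟨h, i, hi⟩
      exact ⟨i + 1, h, i, by omega, hi⟩
    · rintro ⟨N, h, i, -, hi⟩
      exact ⟨h, i, hi⟩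
  have hm : Monotone fun N : ℕ =>
      ((univ : Set U) ×ˢ Icc 0 T) ∩ ((∅ : Set U) ×ˢ (univ : Set ℝ) ∪ ⋃ i < N, B i ×ˢ A i) := by
    intro a b hab
    refine inter_subset_inter_right _ (union_subset_union_right _ ?_)
    exact iUnion₂_subset fun i hi => subset_iUnion₂_of_subset i (lt_of_lt_of_le hi hab) subset_rfl
  rw [h1, hm.measure_iUnion]
  refine iSup_le fun N => ?_
  refine (finite_union_lsc hμs hμ hconv hB hA N isOpen_empty measurableSet_Icc subset_rfl).trans ?_
  refine liminf_le_liminf (Eventually.of_forall fun n => ?_)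
  exact measure_mono (subset_iUnion (fun N : ℕ =>
      ((univ : Set U) ×ˢ Icc 0 T) ∩ ((∅ : Set U) ×ˢ (univ : Set ℝ) ∪ ⋃ i < N, B i ×ˢ A i)) N)

theorem IsSuslin.secondCountable {U : Type*} [TopologicalSpace U]
    [TopologicalSpace.MetrizableSpace U] (hU : IsSuslin U) : SecondCountableTopology U := by
  obtain ⟨S, ts, hS, φ, hφ, hs⟩ := hU
  have : TopologicalSpace.SeparableSpace U := hs.denseRange.separableSpace hφ
  let := TopologicalSpace.metrizableSpaceMetric U
  exact UniformSpace.secondCountable_of_separable U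

theorem IsSuslin.analytic_proj {U : Type*} [TopologicalSpace U]
    [MeasurableSpace U] [BorelSpace U] (hU : IsSuslin U) {E : Set (U × ℝ)} (hE : MeasurableSet E) :
    AnalyticSet (Prod.snd '' E) := by
  obtain ⟨S, ts, hS, φ, hφ, hs⟩ := hU
  borelize S
  have h1 : Measurable (Prod.map φ id : S × ℝ → U × ℝ) := hφ.measurable.prodMap measurable_id
  have h2 : Prod.snd '' E = Prod.snd '' (Prod.map φ id ⁻¹' E : Set (S × ℝ)) := by
    ext t
    constructor
    · rintro ⟨⟨u, t⟩, hp, rfl⟩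
      obtain ⟨s, rfl⟩ := hs u
      exact ⟨(s, t), hp, rfl⟩
    · rintro ⟨p, hp, rfl⟩
      exact ⟨_, hp, rfl⟩
  rw [h2]
  exact (h1 hE).analyticSet.image_of_continuous continuous_snd

theorem open_sections_lsc {U : Type*} [TopologicalSpace U] [TopologicalSpace.MetrizableSpace U]
    [MeasurableSpace U] [BorelSpace U] (hU : IsSuslin U)
    {T : ℝ} {μs : ℕ → Measure (U × ℝ)} {μ : Measure (U × ℝ)}
    (hμs : ∀ n, IsYoungMeasure T (μs n)) (hμ : IsYoungMeasure T μ) (hconv : StablyTendsTo T μs μ)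
    {O : Set (U × ℝ)} (hO : MeasurableSet O) (hO' : ∀ t, IsOpen {u | (u, t) ∈ O}) :
    μ ((univ ×ˢ Icc 0 T) ∩ O) ≤ liminf (fun n => μs n ((univ ×ˢ Icc 0 T) ∩ O)) atTop := by
  have := hU.secondCountable
  obtain ⟨B, hBne, hB⟩ : ∃ B : ℕ → Set U, (∀ i, IsOpen (B i)) ∧
      ∀ V : Set U, IsOpen V → ∀ u ∈ V, ∃ i, u ∈ B i ∧ B i ⊆ V := by
    have hc := TopologicalSpace.countable_countableBasis U
    have hb := TopologicalSpace.isBasis_countableBasis U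
    have hc' : (insert ∅ (TopologicalSpace.countableBasis U)).Countable := hc.insert _
    obtain ⟨B, hB⟩ := hc'.exists_eq_range (insert_nonempty _ _)
    refine ⟨B, fun i => ?_, fun V hV u hu => ?_⟩
    · have : B i ∈ insert ∅ (TopologicalSpace.countableBasis U) := hB ▸ mem_range_self i
      rcases this with h | h
      · rw [h]; exact isOpen_empty
      · exact hb.isOpen h
    · obtain ⟨W, hW, huW, hWV⟩ := hb.exists_subset_of_mem_open hu hV
      have : W ∈ range B := hB ▸ mem_insert_of_mem _ hW
      obtain ⟨i, rfl⟩ := this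
      exact ⟨i, huW, hWV⟩
  let A : ℕ → Set ℝ := fun i => (Prod.snd '' ((B i ×ˢ univ) ∩ Oᶜ : Set (U × ℝ)))ᶜ
  have hAmem : ∀ i t, t ∈ A i ↔ ∀ u ∈ B i, (u, t) ∈ O := by
    intro i t
    simp only [A, mem_compl_iff, mem_image, mem_inter_iff, mem_prod, mem_univ, and_true,
      Prod.exists, exists_eq_right, not_exists, not_and, not_not]
  have hOA : O = ⋃ i, B i ×ˢ A i := by
    ext ⟨u, t⟩
    simp only [mem_iUnion, mem_prod, hAmem]
    constructor
    · intro h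
      obtain ⟨i, hi, hi'⟩ := hB _ (hO' t) u h
      exact ⟨i, hi, fun v hv => hi' hv⟩
    · rintro ⟨i, hi, h⟩
      exact h u hi
  have hnull : ∀ i, NullMeasurableSet (A i) (volume.restrict (Icc 0 T)) := fun i =>
    (analytic_nullMeasurable (hU.analytic_proj
      (((hBne i).measurableSet.prod MeasurableSet.univ).inter hO.compl))).compl
  choose A' hA'sub hA'm hA'ae using fun i => (hnull i).exists_measurable_subset_ae_eq
  have hN : volume.restrict (Icc 0 T) (⋃ i, A i \ A' i) = 0 := by
    rw [measure_iUnion_null_iff]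
    intro i
    exact (ae_le_set.1 (hA'ae i).symm.le)
  obtain ⟨N, hNsub, hNm, hN0⟩ := exists_measurable_superset_of_null hN
  have hμN : μ (univ ×ˢ N) = 0 := by
    rw [hμ N hNm, ← Measure.restrict_apply hNm, hN0]
  calc μ ((univ ×ˢ Icc 0 T) ∩ O)
      ≤ μ (((univ ×ˢ Icc 0 T) ∩ ⋃ i, B i ×ˢ A' i) ∪ univ ×ˢ N) := by
        refine measure_mono ?_
        rintro ⟨u, t⟩ ⟨h1, h2⟩
        rw [hOA, mem_iUnion] at h2
        obtain ⟨i, hi⟩ := h2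
        by_cases ht : t ∈ A' i
        · exact Or.inl ⟨h1, mem_iUnion.2 ⟨i, hi.1, ht⟩⟩
        · exact Or.inr ⟨mem_univ _, hNsub (mem_iUnion.2 ⟨i, hi.2, ht⟩)⟩
    _ ≤ μ ((univ ×ˢ Icc 0 T) ∩ ⋃ i, B i ×ˢ A' i) + μ (univ ×ˢ N) := measure_union_le _ _
    _ = μ ((univ ×ˢ Icc 0 T) ∩ ⋃ i, B i ×ˢ A' i) := by rw [hμN, add_zero]
    _ ≤ liminf (fun n => μs n ((univ ×ˢ Icc 0 T) ∩ ⋃ i, B i ×ˢ A' i)) atTop :=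
        countable_union_lsc hμs hμ hconv hBne hA'm
    _ ≤ _ := by
        refine liminf_le_liminf (Eventually.of_forall fun n => measure_mono ?_)
        refine inter_subset_inter_right _ ?_
        rw [hOA]
        exact iUnion_mono fun i => prod_mono subset_rfl (hA'sub i)

theorem layer_ennreal {α : Type*} [MeasurableSpace α] (ν : Measure α) [IsFiniteMeasure ν]
    {g : α → ℝ≥0∞} (hg : Measurable g) :
    ∫⁻ a, g a ∂ν = ∫⁻ s in Ioi (0:ℝ), ν {a | ENNReal.ofReal s < g a} := by
  have hE : MeasurableSet {q : α × ℝ | ENNReal.ofReal q.2 < g q.1} :=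
    measurableSet_lt (ENNReal.measurable_ofReal.comp measurable_snd) (hg.comp measurable_fst)
  have h1 : ∀ y : ℝ≥0∞, ∫⁻ s in Ioi (0:ℝ), {s : ℝ | ENNReal.ofReal s < y}.indicator 1 s = y := by
    intro y
    have hm : MeasurableSet {s : ℝ | ENNReal.ofReal s < y} :=
      measurableSet_lt ENNReal.measurable_ofReal measurable_const
    rw [lintegral_indicator_one hm, Measure.restrict_apply hm]
    induction y with
    | top =>
      have : {s : ℝ | ENNReal.ofReal s < ⊤} ∩ Ioi 0 = Ioi 0 := by ext s; simp
      rw [this, Real.volume_Ioi]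
    | coe y =>
      have : {s : ℝ | ENNReal.ofReal s < (y:ℝ≥0∞)} ∩ Ioi 0 = Ioo 0 (y:ℝ) := by
        ext s
        simp only [mem_inter_iff, mem_ofPred_eq, mem_Ioi, mem_Ioo]
        constructor
        · rintro ⟨h1, h2⟩
          refine ⟨h2, ?_⟩
          rw [← ENNReal.ofReal_coe_nnreal] at h1
          exact (ENNReal.ofReal_lt_ofReal_iff_of_nonneg h2.le).1 h1
        · rintro ⟨h1, h2⟩
          refine ⟨?_, h1⟩
          rw [← ENNReal.ofReal_coe_nnreal]
          exact (ENNReal.ofReal_lt_ofReal_iff_of_nonneg h1.le).2 h2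
      rw [this, Real.volume_Ioo, sub_zero, ENNReal.ofReal_coe_nnreal]
  calc ∫⁻ a, g a ∂ν
      = ∫⁻ a, (∫⁻ s in Ioi (0:ℝ), {q : α × ℝ | ENNReal.ofReal q.2 < g q.1}.indicator 1 (a, s)) ∂ν := by
        refine lintegral_congr fun a => ?_
        exact (h1 (g a)).symm
    _ = ∫⁻ s in Ioi (0:ℝ), (∫⁻ a, {q : α × ℝ | ENNReal.ofReal q.2 < g q.1}.indicator 1 (a, s) ∂ν) := by
        refine lintegral_lintegral_swap ?_
        exact (measurable_one.indicator hE).aemeasurable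
    _ = _ := by
        refine lintegral_congr fun s => ?_
        have hms : MeasurableSet {a | ENNReal.ofReal s < g a} := measurableSet_lt measurable_const hg
        exact lintegral_indicator_one hms

theorem lintegral_lsc {U : Type*} [TopologicalSpace U] [TopologicalSpace.MetrizableSpace U]
    [MeasurableSpace U] [BorelSpace U] (hU : IsSuslin U)
    {T : ℝ} {μs : ℕ → Measure (U × ℝ)} {μ : Measure (U × ℝ)}
    (hμs : ∀ n, IsYoungMeasure T (μs n)) (hμ : IsYoungMeasure T μ) (hconv : StablyTendsTo T μs μ)
    {g : U × ℝ → ℝ≥0∞} (hg : Measurable g) (hg' : ∀ t, LowerSemicontinuous fun u => g (u, t)) :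
    ∫⁻ p in univ ×ˢ Icc 0 T, g p ∂μ ≤
      liminf (fun n => ∫⁻ p in univ ×ˢ Icc 0 T, g p ∂(μs n)) atTop := by
  have := hμ.finite
  have := fun n => (hμs n).finite
  have hm : ∀ s : ℝ, MeasurableSet {a | ENNReal.ofReal s < g a} := fun s =>
    measurableSet_lt measurable_const hg
  have hr : ∀ (ν : Measure (U × ℝ)) (s : ℝ),
      ν.restrict (univ ×ˢ Icc 0 T) {a | ENNReal.ofReal s < g a} =
      ν ((univ ×ˢ Icc 0 T) ∩ {a | ENNReal.ofReal s < g a}) := fun ν s => by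
    rw [Measure.restrict_apply (hm s), inter_comm]
  rw [layer_ennreal _ hg]
  simp_rw [layer_ennreal _ hg, hr]
  refine (lintegral_mono fun s => ?_).trans (lintegral_liminf_le fun n => ?_)
  · exact open_sections_lsc hU hμs hμ hconv (hm s) fun t => (hg' t).isOpen_preimage _
  · refine Antitone.measurable fun a b hab => measure_mono (inter_subset_inter_right _ ?_)
    intro p hp
    exact lt_of_le_of_lt (ENNReal.ofReal_le_ofReal hab) hp

theorem IsYoungMeasure.map_snd {U : Type*} [MeasurableSpace U] {T : ℝ} {μ : Measure (U × ℝ)}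
    (h : IsYoungMeasure T μ) :
    (μ.restrict (univ ×ˢ Icc 0 T)).map Prod.snd = volume.restrict (Icc 0 T) := by
  ext D hD
  rw [Measure.map_apply measurable_snd hD, Measure.restrict_apply (measurable_snd hD),
    Measure.restrict_apply hD]
  have : (Prod.snd ⁻¹' D ∩ univ ×ˢ Icc 0 T : Set (U × ℝ)) = univ ×ˢ (D ∩ Icc 0 T) := by
    ext p; simp
  rw [this, h _ (hD.inter measurableSet_Icc), inter_assoc, inter_self]

theorem ereal_add_real_continuous (c : ℝ) : Continuous fun x : EReal => x + (c : EReal) := by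
  rw [continuous_iff_continuousAt]
  intro x
  have h : ContinuousAt (fun p : EReal × EReal => p.1 + p.2) (x, (c : EReal)) :=
    EReal.continuousAt_add (Or.inr (EReal.coe_ne_bot c)) (Or.inr (EReal.coe_ne_top c))
  exact h.comp (f := fun x : EReal => (x, (c : EReal))) (by fun_prop)

theorem ereal_liminf_sub (c : ℝ) (a : ℝ≥0∞) (x : ℕ → ℝ≥0∞) (h : a ≤ liminf x atTop) :
    (a : EReal) + c ≤ liminf (fun n => (x n : EReal) + c) atTop := by
  have hmono : Monotone fun y : ℝ≥0∞ => (y : EReal) + c := fun y z hyz =>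
    add_le_add_left (EReal.coe_ennreal_le_coe_ennreal_iff.2 hyz) _
  have hcont : Continuous fun y : ℝ≥0∞ => (y : EReal) + c :=
    (ereal_add_real_continuous c).comp continuous_coe_ennreal_ereal
  refine (hmono h).trans ?_
  exact (hmono.map_liminf_of_continuousAt x hcont.continuousAt).le

theorem pointwise_identity (r c : ℝ) (h1 : -c ≤ r) (h2 : r ≤ c) :
    ENNReal.ofReal r + ENNReal.ofReal c = ENNReal.ofReal (-r) + ENNReal.ofReal (r + c) := by
  rcases le_total 0 r with h | h
  · rw [ENNReal.ofReal_of_nonpos (by linarith : -r ≤ 0), zero_add,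
      ENNReal.ofReal_add h (by linarith)]
  · rw [ENNReal.ofReal_of_nonpos h, zero_add, ← ENNReal.ofReal_add (by linarith) (by linarith)]
    congr 1; ring

theorem eIntegral_shift {α : Type*} [MeasurableSpace α] (ν : Measure α) (f : α → EReal)
    (hf : Measurable f) (c : α → ℝ) (hc : Measurable c)
    (hfin : ∫⁻ a, ENNReal.ofReal (c a) ∂ν ≠ ⊤)
    (h : ∀ᵐ a ∂ν, -(c a : EReal) ≤ f a ∧ f a ≤ (c a : EReal)) :
    eIntegral ν f = ((∫⁻ a, (f a + (c a : EReal)).toENNReal ∂ν : ℝ≥0∞) : EReal) +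
      ((-(∫⁻ a, ENNReal.ofReal (c a) ∂ν).toReal : ℝ) : EReal) := by
  have hpt : ∀ᵐ a ∂ν, ∃ r : ℝ, f a = r ∧ -c a ≤ r ∧ r ≤ c a := by
    filter_upwards [h] with a ha
    have hb : f a ≠ ⊥ := by
      intro hb; rw [hb, ← EReal.coe_neg] at ha; exact absurd ha.1 (by simp)
    have ht : f a ≠ ⊤ := by
      intro hb; rw [hb] at ha; exact absurd ha.2 (by simp)
    refine ⟨(f a).toReal, (EReal.coe_toReal ht hb).symm, ?_, ?_⟩
    · rw [← EReal.coe_le_coe_iff, EReal.coe_toReal ht hb]; simpa using ha.1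
    · rw [← EReal.coe_le_coe_iff, EReal.coe_toReal ht hb]; exact ha.2
  have hreal : ∀ r : ℝ, erealPos r = ENNReal.ofReal r := fun r => by simp [erealPos]
  have hmp : Measurable fun a => erealPos (f a) := measurable_ereal_toENNReal.comp hf
  have hmm : Measurable fun a => erealPos (-(f a)) := measurable_ereal_toENNReal.comp hf.neg
  have hsum : (∫⁻ a, erealPos (f a) ∂ν) + ∫⁻ a, ENNReal.ofReal (c a) ∂ν =
      (∫⁻ a, erealPos (-(f a)) ∂ν) + ∫⁻ a, (f a + (c a : EReal)).toENNReal ∂ν := by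
    rw [← lintegral_add_left hmp, ← lintegral_add_left hmm]
    refine lintegral_congr_ae ?_
    filter_upwards [hpt] with a ⟨r, hr, h1, h2⟩
    rw [hr, ← EReal.coe_neg, hreal, hreal, ← EReal.coe_add, EReal.toENNReal_of_ne_top (EReal.coe_ne_top _),
      EReal.toReal_coe]
    exact pointwise_identity r (c a) h1 h2
  have hP : ∫⁻ a, erealPos (f a) ∂ν ≠ ⊤ := by
    refine ne_top_of_le_ne_top hfin (lintegral_mono_ae ?_)
    filter_upwards [hpt] with a ⟨r, hr, h1, h2⟩
    rw [hr, hreal]; exact ENNReal.ofReal_le_ofReal h2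
  have hM : ∫⁻ a, erealPos (-(f a)) ∂ν ≠ ⊤ := by
    refine ne_top_of_le_ne_top hfin (lintegral_mono_ae ?_)
    filter_upwards [hpt] with a ⟨r, hr, h1, h2⟩
    rw [hr, ← EReal.coe_neg, hreal]; exact ENNReal.ofReal_le_ofReal (by linarith)
  have hQ : ∫⁻ a, (f a + (c a : EReal)).toENNReal ∂ν ≠ ⊤ := by
    refine ne_top_of_le_ne_top (ENNReal.add_ne_top.2 ⟨hP, hfin⟩) ?_
    rw [hsum]; exact le_add_self
  unfold eIntegral
  generalize (∫⁻ a, erealPos (f a) ∂ν) = P at *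
  generalize (∫⁻ a, erealPos (-(f a)) ∂ν) = M at *
  generalize (∫⁻ a, (f a + (c a : EReal)).toENNReal ∂ν) = Q at *
  generalize (∫⁻ a, ENNReal.ofReal (c a) ∂ν) = C at *
  have hs := congrArg ENNReal.toReal hsum
  rw [ENNReal.toReal_add hP hfin, ENNReal.toReal_add hM hQ] at hs
  rw [← EReal.coe_ennreal_toReal hP, ← EReal.coe_ennreal_toReal hM, ← EReal.coe_ennreal_toReal hQ,
    ← EReal.coe_sub, ← EReal.coe_add, EReal.coe_eq_coe_iff]
  linarith

/-- Lower semicontinuity of integral functionals of Young measures under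
stable convergence, for integrands `l : [0,T] × U → [-∞,+∞]` that are measurable, lower
semicontinuous in `u`, and either dominated by an integrable `G` or nonnegative. -/
theorem young_measure_integral_lsc_stable
    (T : ℝ) (hT : 0 < T)
    (U : Type*) [TopologicalSpace U] [TopologicalSpace.MetrizableSpace U]
    [MeasurableSpace U] [BorelSpace U] (hU : IsSuslin U)
    (G : ℝ → ℝ) (hG : IntegrableOn G (Set.Icc 0 T))
    (l : ℝ → U → EReal)
    (hlmeas : Measurable fun p : U × ℝ => l p.2 p.1)
    (hlsc : ∀ t : ℝ, LowerSemicontinuous (l t))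
    (hcond :
      (∀ᵐ t ∂(volume.restrict (Set.Icc (0:ℝ) T)),
        ∀ u : U, -((G t : EReal)) ≤ l t u ∧ l t u ≤ (G t : EReal)) ∨
      (∀ (t : ℝ) (u : U), 0 ≤ l t u))
    (μs : ℕ → Measure (U × ℝ)) (μ : Measure (U × ℝ))
    (hμs : ∀ n, IsYoungMeasure T (μs n)) (hμ : IsYoungMeasure T μ)
    (hconv : StablyTendsTo T μs μ) :
    eIntegral (μ.restrict (Set.univ ×ˢ Set.Icc (0:ℝ) T)) (fun p => l p.2 p.1) ≤
      Filter.liminf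
        (fun n => eIntegral ((μs n).restrict (Set.univ ×ˢ Set.Icc (0:ℝ) T)) (fun p => l p.2 p.1))
        Filter.atTop := by
  rcases hcond with hcond | hcond
  · set G' : ℝ → ℝ := hG.1.mk G with hG'
    have hG'm : Measurable G' := hG.1.stronglyMeasurable_mk.measurable
    have hGG : G =ᵐ[volume.restrict (Icc 0 T)] G' := hG.1.ae_eq_mk
    have hG'i : IntegrableOn G' (Icc 0 T) := hG.congr hGG
    have hae : ∀ᵐ t ∂(volume.restrict (Icc (0:ℝ) T)),
        ∀ u : U, -((G' t : EReal)) ≤ l t u ∧ l t u ≤ (G' t : EReal) := by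
      filter_upwards [hcond, hGG] with t h1 h2
      rw [← h2]; exact h1
    set C : ℝ≥0∞ := ∫⁻ t in Icc 0 T, ENNReal.ofReal (G' t) with hC
    have hCfin : C ≠ ⊤ := hG'i.lintegral_lt_top.ne
    have key : ∀ ν : Measure (U × ℝ), IsYoungMeasure T ν →
        eIntegral (ν.restrict (univ ×ˢ Icc (0:ℝ) T)) (fun p => l p.2 p.1) =
        ((∫⁻ p in univ ×ˢ Icc 0 T, (l p.2 p.1 + (G' p.2 : EReal)).toENNReal ∂ν : ℝ≥0∞) : EReal) +
          ((-C.toReal : ℝ) : EReal) := by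
      intro ν hν
      have hCν : ∫⁻ p in univ ×ˢ Icc 0 T, ENNReal.ofReal (G' p.2) ∂ν = C := by
        rw [hC, ← hν.map_snd, lintegral_map (by fun_prop) measurable_snd]
      rw [eIntegral_shift _ _ hlmeas (fun p => G' p.2) (hG'm.comp measurable_snd)
        (by rw [hCν]; exact hCfin), hCν]
      have h3 := hae
      rw [← hν.map_snd] at h3
      filter_upwards [ae_of_ae_map measurable_snd.aemeasurable h3] with p hp
      exact hp p.1
    rw [key μ hμ]
    simp_rw [fun n => key (μs n) (hμs n)]
    refine ereal_liminf_sub _ _ _ ?_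
    refine lintegral_lsc hU hμs hμ hconv (g := fun p => (l p.2 p.1 + (G' p.2 : EReal)).toENNReal) ?_ ?_
    · refine measurable_ereal_toENNReal.comp (hlmeas.add ?_)
      exact measurable_coe_real_ereal.comp (hG'm.comp measurable_snd)
    · intro t
      refine ((EReal.continuous_toENNReal.comp (ereal_add_real_continuous (G' t))).comp_lowerSemicontinuous
        (hlsc t)) ?_
      intro x y hxy
      exact EReal.toENNReal_le_toENNReal (add_le_add_left hxy _)
  · have key : ∀ ν : Measure (U × ℝ),
        eIntegral (ν.restrict (univ ×ˢ Icc (0:ℝ) T)) (fun p => l p.2 p.1) =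
        ((∫⁻ p in univ ×ˢ Icc 0 T, (l p.2 p.1).toENNReal ∂ν : ℝ≥0∞) : EReal) + ((0:ℝ) : EReal) := by
      intro ν
      have h0 : ∀ p : U × ℝ, erealPos (-(l p.2 p.1)) = 0 := fun p =>
        EReal.toENNReal_of_nonpos (by simpa using hcond p.2 p.1)
      unfold eIntegral
      simp only [h0, lintegral_zero]
      simp only [EReal.coe_ennreal_zero, EReal.coe_zero, sub_zero, add_zero]
      rfl
    simp_rw [key]
    refine ereal_liminf_sub _ _ _ ?_
    refine lintegral_lsc hU hμs hμ hconv (g := fun p => (l p.2 p.1).toENNReal)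
      (measurable_ereal_toENNReal.comp hlmeas) ?_
    intro t
    exact EReal.continuous_toENNReal.comp_lowerSemicontinuous (hlsc t)
      fun x y hxy => EReal.toENNReal_le_toENNReal hxy
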